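/- Let (V, w, d) be a finite weighted metric space and define cost(S) = ∑_{x∈V} w(x)·min_{y∈S} d(x,y) for nonempty S ⊆ V. Then for all subsets A ⊆ B ⊆ V with A nonempty, ∑_{y ∈ B∖A} ( cost(B − y) − cost(B) ) ≤ cost(A) − cost(B), where B − y denotes B with the point y removed. -/

import Mathlib

/-!
The inequality holds separately for each point `x`, and summing with the weights `w x` gives the
theorem. Fix `x` and a point `b ∈ B` nearest to `x`. Removing any `y ≠ b` from `B` leaves
`d(x, B)` unchanged, so at most the term `y = b` contributes to the sum over `B \ A`. If `b ∈ A`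
that term is absent, and `d(x, B) ≤ d(x, A)`. If `b ∉ A`, then `A ⊆ B - b`, so
`d(x, B - b) ≤ d(x, A)`.
-/

open Finset

/-- Distance from a point to a (nonempty) finite set: `min_{y ∈ S} d(x,y)`. -/
noncomputable def distToSet {V : Type*} [MetricSpace V] (x : V) (S : Finset V) : ℝ :=
  sInf ((fun y => dist x y) '' ↑S)

/-- `k`-median cost of a center set `S` with respect to the point set `U`:
`∑_{x ∈ U} w(x) · d(x, S)`. -/
noncomputable def kCost {V : Type*} [MetricSpace V] (w : V → NNReal) (S U : Finset V) : ℝ :=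
  ∑ x ∈ U, (w x : ℝ) * distToSet x S

/-- `OPT_k(U, X)`: minimum over `S ⊆ X` with `|S| = k` of `kCost w S U`. -/
noncomputable def kOPT {V : Type*} [MetricSpace V] (w : V → NNReal) (k : ℕ) (U X : Finset V) : ℝ :=
  sInf {c : ℝ | ∃ S : Finset V, S ⊆ X ∧ S.card = k ∧ c = kCost w S U}

lemma distToSet_le {V : Type*} [MetricSpace V] (x : V) {S : Finset V} {y : V} (hy : y ∈ S) :
    distToSet x S ≤ dist x y :=
  csInf_le (S.finite_toSet.image _).bddBelow ⟨y, hy, rfl⟩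

lemma exists_distToSet_eq {V : Type*} [MetricSpace V] (x : V) {S : Finset V} (hS : S.Nonempty) :
    ∃ b ∈ S, distToSet x S = dist x b := by
  have hS' : ((fun y => dist x y) '' (S : Set V)).Nonempty := (coe_nonempty.2 hS).image _
  obtain ⟨b, hb, h⟩ := hS'.csInf_mem (S.finite_toSet.image _)
  exact ⟨b, hb, h.symm⟩

/-- Nonemptiness of `S` is needed because `distToSet x ∅` is `sInf ∅ = 0`. -/
lemma distToSet_anti {V : Type*} [MetricSpace V] (x : V) {S T : Finset V} (hS : S.Nonempty)
    (h : S ⊆ T) : distToSet x T ≤ distToSet x S := by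
  obtain ⟨b, hb, e⟩ := exists_distToSet_eq x hS
  exact e ▸ distToSet_le x (h hb)

/-- The contribution of a single point `x`, before weighting. -/
lemma sum_distToSet_erase_le {V : Type*} [MetricSpace V] [DecidableEq V] (x : V)
    {A B : Finset V} (hA : A.Nonempty) (hAB : A ⊆ B) :
    ∑ y ∈ B \ A, (distToSet x (B.erase y) - distToSet x B) ≤ distToSet x A - distToSet x B := by
  obtain ⟨b, hb, e⟩ := exists_distToSet_eq x (hA.mono hAB)
  have hzero : ∀ y, y ≠ b → distToSet x (B.erase y) - distToSet x B = 0 := by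
    intro y hy
    have hb' : b ∈ B.erase y := mem_erase.2 ⟨hy.symm, hb⟩
    have h₁ := distToSet_le x hb'
    have h₂ := distToSet_anti x ⟨b, hb'⟩ (erase_subset y B)
    linarith
  by_cases hbA : b ∈ A
  · rw [sum_eq_zero fun y hy => hzero y fun h => (mem_sdiff.1 hy).2 (h ▸ hbA)]
    exact sub_nonneg.2 (distToSet_anti x hA hAB)
  · rw [sum_eq_single_of_mem b (mem_sdiff.2 ⟨hb, hbA⟩) fun y _ hy => hzero y hy]
    exact sub_le_sub_right (distToSet_anti x hA (subset_erase.2 ⟨hAB, hbA⟩)) _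

/-- `∑_{y ∈ B \ A} (cost(B − y) − cost(B)) ≤ cost(A) − cost(B)` for `A ⊆ B`. -/
theorem sum_removal_increase_le {V : Type*} [Fintype V] [MetricSpace V] [DecidableEq V]
    (w : V → NNReal) (A B : Finset V) (hA : A.Nonempty) (hAB : A ⊆ B) :
    ∑ y ∈ B \ A, (kCost w (B.erase y) Finset.univ - kCost w B Finset.univ) ≤
      kCost w A Finset.univ - kCost w B Finset.univ := by
  simp only [kCost, ← sum_sub_distrib, ← mul_sub]
  rw [sum_comm]
  simp only [← mul_sum]
  exact sum_le_sum fun x _ =>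
    mul_le_mul_of_nonneg_left (sum_distToSet_erase_le x hA hAB) (w x).coe_nonneg
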